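/- Chebyshev alternation characterization: Let [A,B] be a real segment with A < B, let f : [A,B] → ℝ be continuous, and let m, n be nonnegative integers. Assume f does not coincide on [A,B] with any rational function of type (n,m). Let R = P/Q be a rational function of type (n,m) on [A,B] where P and Q are coprime, P is not the zero polynomial, deg P = n − ν and deg Q = m − μ with 0 ≤ ν ≤ n and 0 ≤ μ ≤ m, and set d = min(μ, ν) and Δ = sup_{x∈[A,B]} |f(x) − R(x)|. Then R is a best approximant of type (n,m) to f on [A,B] if and only if there exist N = m + n + 2 − d points x₁ < x₂ < ⋯ < x_N in [A,B] and a sign ε ∈ {−1, +1} such that f(x_k) − R(x_k) = ε·(−1)^k·Δ for every k = 1, …, N. -/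

import Mathlib

/-- A rational function of type (n,m) on [A,B]. -/
def IsRatFun (A B : ℝ) (n m : ℕ) (R : ℝ → ℝ) : Prop :=
  ∃ P Q : Polynomial ℝ, P.natDegree ≤ n ∧ Q.natDegree ≤ m ∧
    (∀ x ∈ Set.Icc A B, Q.eval x ≠ 0) ∧
    ∀ x ∈ Set.Icc A B, R x = P.eval x / Q.eval x

/-!
Write `e = f - P / Q`. The difference of `P / Q` and a competitor `P₁ / Q₁` is
`(P₁ * Q - P * Q₁) / (Q * Q₁)`, and its numerator has degree at most
`D = max (n + deg Q) (m + deg P) = m + n - d`.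

If `e` alternates `D + 2` times with amplitude `Δ`, a competitor with uniform error below `Δ` would
make this numerator change sign `D + 1` times.

Conversely, as `P` and `Q` are coprime, every polynomial `w` of degree at most `D` is such a
numerator. If `e` has no alternation of length `D + 2`, some `w` of degree at most `D` has the sign
of `e` wherever `|e| = Δ`, and `(P + t * P₁) / (Q + t * Q₁)` improves on `P / Q` for small `t > 0`.
-/

open Filter Polynomial Set Topology

section Numerators

variable {F : Type*} [Field F] {P Q w : F[X]} {n m : ℕ}

theorem natDegree_mul_sub_mul_le {P₁ Q₁ : F[X]} (hP₁ : P₁.natDegree ≤ n) (hQ₁ : Q₁.natDegree ≤ m) :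
    (P₁ * Q - P * Q₁).natDegree ≤ max (n + Q.natDegree) (m + P.natDegree) := by
  have hPQ : (P₁ * Q).natDegree ≤ P₁.natDegree + Q.natDegree := natDegree_mul_le
  have hQP : (P * Q₁).natDegree ≤ P.natDegree + Q₁.natDegree := natDegree_mul_le
  have hsub := natDegree_sub_le (P₁ * Q) (P * Q₁)
  omega

theorem exists_mul_add_mul_eq_of_isCoprime {M : ℕ} (h : IsCoprime P Q) (hQ0 : Q ≠ 0)
    (hw : w.natDegree ≤ M + Q.natDegree) (hP : P.natDegree ≤ M) :
    ∃ a b : F[X], a * P + b * Q = w ∧ a.natDegree ≤ Q.natDegree ∧ b.natDegree ≤ M := by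
  obtain ⟨a, b, hab⟩ := h
  set r := w * a % Q
  set c := w * b + w * a / Q * P
  have heq : r * P + c * Q = w := by
    linear_combination w * hab + P * EuclideanDomain.mod_eq_sub_mul_div (w * a) Q
  have hr : r.natDegree ≤ Q.natDegree :=
    natDegree_le_natDegree (EuclideanDomain.mod_lt (w * a) hQ0).le
  refine ⟨r, c, heq, hr, ?_⟩
  rcases eq_or_ne c 0 with hc | hc
  · simp [hc]
  have hcQ : (c * Q).natDegree = c.natDegree + Q.natDegree := natDegree_mul hc hQ0
  rw [eq_sub_of_add_eq' heq] at hcQ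
  have hsub := natDegree_sub_le w (r * P)
  have hrP : (r * P).natDegree ≤ r.natDegree + P.natDegree := natDegree_mul_le
  omega

theorem exists_mul_sub_mul_eq_of_isCoprime (h : IsCoprime P Q) (hP0 : P ≠ 0) (hQ0 : Q ≠ 0)
    (hP : P.natDegree ≤ n) (hQ : Q.natDegree ≤ m)
    (hw : w.natDegree ≤ max (n + Q.natDegree) (m + P.natDegree)) :
    ∃ P₁ Q₁ : F[X], P₁ * Q - P * Q₁ = w ∧ P₁.natDegree ≤ n ∧ Q₁.natDegree ≤ m := by
  rcases le_max_iff.mp hw with hw | hw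
  · obtain ⟨a, b, hab, ha, hb⟩ := exists_mul_add_mul_eq_of_isCoprime h hQ0 hw hP
    exact ⟨b, -a, by linear_combination hab, hb, by simpa using ha.trans hQ⟩
  · obtain ⟨a, b, hab, ha, hb⟩ := exists_mul_add_mul_eq_of_isCoprime h.symm hP0 hw hQ
    exact ⟨a, -b, by linear_combination hab, ha.trans hP, by simpa using hb⟩

end Numerators

theorem exists_strictMono_zeros_of_alternating_sign {α : Type*} [ConditionallyCompleteLinearOrder α]
    [DenselyOrdered α] [TopologicalSpace α] [OrderTopology α] {s : Set α} (hs : s.OrdConnected)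
    {g : α → ℝ} (hg : ContinuousOn g s) {M : ℕ} {x : Fin (M + 1) → α} (hx : StrictMono x)
    (hxs : ∀ k, x k ∈ s) (hsign : ∀ k : Fin (M + 1), 0 < (-1) ^ (k : ℕ) * g (x k)) :
    ∃ z : Fin M → α, StrictMono z ∧ ∀ i, z i ∈ s ∧ g (z i) = 0 := by
  have hzero (i : Fin M) : ∃ z ∈ Ioo (x i.castSucc) (x i.succ), (-1) ^ (i : ℕ) * g z = 0 := by
    have hsub : Icc (x i.castSucc) (x i.succ) ⊆ s := hs.out (hxs _) (hxs _)
    refine intermediate_value_Ioo' (f := fun y => (-1) ^ (i : ℕ) * g y)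
      (hx Fin.castSucc_lt_succ).le (continuousOn_const.mul (hg.mono hsub)) ⟨?_, hsign i.castSucc⟩
    simpa [pow_succ] using hsign i.succ
  choose z hz hz0 using hzero
  refine ⟨z, fun i j hij => ?_, fun i => ⟨?_, by simpa using hz0 i⟩⟩
  · exact (hz i).2.trans_le ((hx.monotone (Fin.succ_le_castSucc_iff.mpr hij)).trans (hz j).1.le)
  · exact hs.out (hxs _) (hxs _) (Ioo_subset_Icc_self (hz i))

/-- `HasAlternation s e δ N`: the function `e` takes the values `δ` and `-δ` alternately along an
increasing sequence of `N` points of `s`. The sign `ε` is that of the first value. -/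
def HasAlternation (s : Set ℝ) (e : ℝ → ℝ) (δ : ℝ) (N : ℕ) : Prop :=
  ∃ (x : Fin N → ℝ) (ε : ℝ), (ε = 1 ∨ ε = -1) ∧ StrictMono x ∧ (∀ k, x k ∈ s) ∧
    ∀ k : Fin N, e (x k) = ε * (-1) ^ (k : ℕ) * δ

theorem hasAlternation_zero {s : Set ℝ} (hs : s.Infinite) {e : ℝ → ℝ} (he : ∀ x ∈ s, e x = 0)
    (N : ℕ) : HasAlternation s e 0 N := by
  obtain ⟨t, hts, ht⟩ := hs.exists_subset_card_eq N
  have hmem (k : Fin N) : t.orderEmbOfFin ht k ∈ s := hts (t.orderEmbOfFin_mem ht k)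
  exact ⟨_, 1, Or.inl rfl, (t.orderEmbOfFin ht).strictMono, hmem, fun k => by simp [he _ (hmem k)]⟩

theorem de_la_vallee_poussin {s : Set ℝ} (hs : s.OrdConnected) {f : ℝ → ℝ} {P Q P₁ Q₁ : ℝ[X]}
    (hQ : ∀ x ∈ s, Q.eval x ≠ 0) (hQ₁ : ∀ x ∈ s, Q₁.eval x ≠ 0) {M : ℕ}
    (hM : (P₁ * Q - P * Q₁).natDegree < M) {x : Fin (M + 1) → ℝ} (hx : StrictMono x)
    (hxs : ∀ k, x k ∈ s) {ε δ : ℝ} (hε : |ε| = 1)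
    (hδ : ∀ k : Fin (M + 1), δ ≤ ε * (-1) ^ (k : ℕ) * (f (x k) - P.eval (x k) / Q.eval (x k))) :
    ∃ k, δ ≤ |f (x k) - P₁.eval (x k) / Q₁.eval (x k)| := by
  by_contra! hlt
  set g : ℝ → ℝ := fun y => P₁.eval y / Q₁.eval y - P.eval y / Q.eval y with hg
  have hgc : ContinuousOn g s :=
    (P₁.continuousOn.div Q₁.continuousOn hQ₁).sub (P.continuousOn.div Q.continuousOn hQ)
  have hnum : ∀ y ∈ s, (P₁ * Q - P * Q₁).eval y = g y * (Q.eval y * Q₁.eval y) := by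
    intro y hy
    have := hQ y hy
    have := hQ₁ y hy
    simp only [hg, eval_sub, eval_mul]
    field_simp
  have hsign (k : Fin (M + 1)) : 0 < (-1) ^ (k : ℕ) * (ε * g (x k)) := by
    have hle : ε * (-1) ^ (k : ℕ) * (f (x k) - P₁.eval (x k) / Q₁.eval (x k)) ≤
        |f (x k) - P₁.eval (x k) / Q₁.eval (x k)| :=
      (le_abs_self _).trans_eq (by simp [abs_mul, hε])
    simp only [hg]
    linarith [hδ k, hlt k]
  obtain ⟨z, hz, hz0⟩ := exists_strictMono_zeros_of_alternating_sign hs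
    (continuousOn_const.mul hgc) hx hxs hsign
  have hε0 : ε ≠ 0 := by rintro rfl; simp at hε
  have hp : P₁ * Q - P * Q₁ = 0 := by
    refine eq_zero_of_natDegree_lt_card_of_eval_eq_zero _ hz.injective (fun i => ?_) (by simpa)
    rw [hnum _ (hz0 i).1, (mul_eq_zero.mp (hz0 i).2).resolve_left hε0, zero_mul]
  have hg0 : g (x 0) = 0 := by
    simpa [hp, hQ _ (hxs 0), hQ₁ _ (hxs 0)] using (hnum _ (hxs 0)).symm
  simpa [hg0] using hsign 0

section Separation

variable {α : Type*} [Preorder α]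

/-- `IsAlternating U V x`: the sequence `x` increases and its terms lie alternately in `U` and `V`,
the first one in `U`. -/
def IsAlternating (U V : Set α) {N : ℕ} (x : Fin N → α) : Prop :=
  StrictMono x ∧ ∀ k : Fin N, (Even (k : ℕ) → x k ∈ U) ∧ (Odd (k : ℕ) → x k ∈ V)

theorem IsAlternating.vecCons {U V : Set α} {N : ℕ} {x : Fin (N + 1) → α}
    (hx : IsAlternating V U x) {a : α} (ha : a ∈ U) (hax : a < x 0) :
    IsAlternating U V (Matrix.vecCons a x) := by
  refine ⟨hx.1.vecCons hax, Fin.cases (by simp [ha]) fun k => ?_⟩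
  simpa [Nat.even_add_one, Nat.odd_add_one] using (hx.2 k).symm

theorem IsAlternating.mono {U V U' V' : Set α} {N : ℕ}
    {x : Fin (N + 1) → α} (hx : IsAlternating U V x) (hU : U ∩ Ici (x 0) ⊆ U')
    (hV : V ∩ Ici (x 0) ⊆ V') : IsAlternating U' V' x :=
  ⟨hx.1, fun k => ⟨fun hk => hU ⟨(hx.2 k).1 hk, hx.1.monotone (Fin.zero_le k)⟩,
    fun hk => hV ⟨(hx.2 k).2 hk, hx.1.monotone (Fin.zero_le k)⟩⟩⟩

theorem IsAlternating.hasAlternation {s : Set ℝ} {e : ℝ → ℝ} {ε δ : ℝ} (hε : ε = 1 ∨ ε = -1)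
    {N : ℕ} {x : Fin N → ℝ}
    (hx : IsAlternating {y ∈ s | e y = ε * δ} {y ∈ s | e y = -ε * δ} x) :
    HasAlternation s e δ N := by
  refine ⟨x, ε, hε, hx.1, fun k => ?_, fun k => ?_⟩ <;>
    rcases Nat.even_or_odd (k : ℕ) with hk | hk
  · exact ((hx.2 k).1 hk).1
  · exact ((hx.2 k).2 hk).1
  · simpa [hk.neg_one_pow] using ((hx.2 k).1 hk).2
  · simpa [hk.neg_one_pow] using ((hx.2 k).2 hk).2

/-- `StrictlySeparates w U V`: the polynomial `w` is positive on `U` and negative on `V`. -/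
def StrictlySeparates (w : ℝ[X]) (U V : Set ℝ) : Prop :=
  (∀ x ∈ U, 0 < w.eval x) ∧ ∀ x ∈ V, w.eval x < 0

theorem StrictlySeparates.neg {w : ℝ[X]} {U V : Set ℝ} (h : StrictlySeparates w U V) :
    StrictlySeparates (-w) V U :=
  ⟨fun x hx => by simpa using h.2 x hx, fun x hx => by simpa using h.1 x hx⟩

theorem StrictlySeparates.mul_C_sub_X {w : ℝ[X]} {U V : Set ℝ} {z c : ℝ} (hzc : z < c)
    (hw : StrictlySeparates w (V ∩ Ici c) (U ∪ Iic z)) (hU : U ⊆ Ici c)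
    (hV : Disjoint V (Icc z c)) : StrictlySeparates (w * (C z - X)) U V := by
  refine ⟨fun y hy => ?_, fun y hy => ?_⟩ <;> simp only [eval_mul, eval_sub, eval_C, eval_X]
  · exact mul_pos_of_neg_of_neg (hw.2 y (Or.inl hy)) (sub_neg.mpr (hzc.trans_le (hU hy)))
  · rcases le_or_gt c y with hcy | hyc
    · exact mul_neg_of_pos_of_neg (hw.1 y ⟨hy, hcy⟩) (sub_neg.mpr (hzc.trans_le hcy))
    · have hyz : y < z := lt_of_not_ge fun hzy => hV.notMem_of_mem_left hy ⟨hzy, hyc.le⟩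
      exact mul_neg_of_neg_of_pos (hw.2 y (Or.inr hyz.le)) (sub_pos.mpr hyz)

theorem exists_strictlySeparates_of_not_isAlternating (k : ℕ) {U V : Set ℝ}
    (hU : IsClosed U) (hUb : BddBelow U) (hV : IsClosed V) (hUV : Disjoint U V)
    (h : ∀ x : Fin (k + 1) → ℝ, ¬ IsAlternating U V x) :
    ∃ w : ℝ[X], w.natDegree ≤ k ∧ StrictlySeparates w U V := by
  induction k generalizing U V with
  | zero =>
    have hUe (y : ℝ) : y ∉ U := fun hy =>
      h ![y] ⟨Subsingleton.strictMono (α := Fin 1) _, by simp [hy]⟩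
    exact ⟨-1, by simp, fun y hy => (hUe y hy).elim, by simp⟩
  | succ k ih =>
    rcases U.eq_empty_or_nonempty with rfl | hUne
    · exact ⟨-1, by simp, by simp, by simp⟩
    obtain ⟨c, hcU, hcle⟩ : ∃ c, IsLeast U c := ⟨_, hU.isLeast_csInf hUne hUb⟩
    have hcV : c ∉ V := hUV.notMem_of_mem_left hcU
    obtain ⟨z, hzc : z < c, hzV⟩ := mem_nhdsLE_iff_exists_Icc_subset.mp
      (mem_nhdsWithin_of_mem_nhds (hV.isOpen_compl.mem_nhds hcV))
    have hdisj : Disjoint (V ∩ Ici c) (U ∪ Iic z) := by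
      rw [disjoint_left]
      rintro y ⟨hyV, hcy⟩ (hyU | hyz)
      · exact hUV.notMem_of_mem_left hyU hyV
      · exact (hzc.trans_le hcy).not_ge hyz
    -- Including the half-line `Iic z` makes `w` negative on the part of `V` to the left of `c`,
    -- at no cost: an alternating sequence starting to the right of `c` never meets it.
    obtain ⟨w, hwk, hw⟩ := ih (hV.inter isClosed_Ici) ⟨c, fun y hy => hy.2⟩
      (hU.union isClosed_Iic) hdisj fun x hx => by
        obtain ⟨hx0V, hx0c⟩ : x 0 ∈ V ∩ Ici c := (hx.2 0).1 (by simp)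
        have hcx : c < x 0 := lt_of_le_of_ne hx0c fun heq => hcV (heq ▸ hx0V)
        refine h _ ((hx.mono (fun y hy => hy.1.1) ?_).vecCons hcU hcx)
        rintro y ⟨hyU | hyz, hxy⟩
        · exact hyU
        · exact absurd hyz (hzc.trans (hcx.trans_le hxy)).not_ge
    exact ⟨w * (C z - X), natDegree_mul_le.trans (by rw [natDegree_sub, natDegree_X_sub_C]; omega),
      hw.mul_C_sub_X hzc hcle (subset_compl_iff_disjoint_left.mp hzV)⟩

theorem exists_strictlySeparates_of_not_isAlternating_or_swap (k : ℕ) {U V : Set ℝ}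
    (hU : IsClosed U) (hUb : BddBelow U) (hV : IsClosed V) (hVb : BddBelow V) (hUV : Disjoint U V)
    (h : ∀ x : Fin (k + 2) → ℝ, ¬ IsAlternating U V x)
    (h' : ∀ x : Fin (k + 2) → ℝ, ¬ IsAlternating V U x) :
    ∃ w : ℝ[X], w.natDegree ≤ k ∧ StrictlySeparates w U V := by
  rcases (U ∪ V).eq_empty_or_nonempty with hempty | hne
  · obtain ⟨rfl, rfl⟩ := union_empty_iff.mp hempty
    exact ⟨0, by simp, by simp, by simp⟩
  obtain ⟨c, hc, hcle⟩ : ∃ c, IsLeast (U ∪ V) c :=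
    ⟨_, (hU.union hV).isLeast_csInf hne (hUb.union hVb)⟩
  wlog hcU : c ∈ U generalizing U V
  · obtain ⟨w, hwk, hw⟩ := this hV hVb hU hUb hUV.symm h' h (union_comm U V ▸ hne) hc.symm
      (union_comm U V ▸ hcle) (hc.resolve_left hcU)
    exact ⟨-w, by simpa, hw.neg⟩
  obtain ⟨w, hwk, hw⟩ := exists_strictlySeparates_of_not_isAlternating k hV hVb hU hUV.symm
    fun x hx => by
      have hx0 : x 0 ∈ V := (hx.2 0).1 (by simp)
      have hne : c ≠ x 0 := fun heq => hUV.notMem_of_mem_left hcU (heq ▸ hx0)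
      exact h _ (hx.vecCons hcU (lt_of_le_of_ne (hcle (Or.inr hx0)) hne))
  exact ⟨-w, by simpa, hw.neg⟩

end Separation

theorem exists_polynomial_sign_eq_of_not_hasAlternation {K : Set ℝ} (hK : IsCompact K)
    {e : ℝ → ℝ} (he : ContinuousOn e K) {δ : ℝ} (hδ : 0 < δ) {k : ℕ}
    (h : ¬ HasAlternation K e δ (k + 2)) :
    ∃ w : ℝ[X], w.natDegree ≤ k ∧ ∀ x ∈ K, |e x| = δ → 0 < e x * w.eval x := by
  have hclosed (a : ℝ) : IsClosed {y ∈ K | e y = a} :=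
    he.preimage_isClosed_of_isClosed hK.isClosed isClosed_singleton
  have hbdd (a : ℝ) : BddBelow {y ∈ K | e y = a} := hK.bddBelow.mono (sep_subset _ _)
  have hnot (ε : ℝ) (hε : ε = 1 ∨ ε = -1) (x : Fin (k + 2) → ℝ) :
      ¬ IsAlternating {y ∈ K | e y = ε * δ} {y ∈ K | e y = -ε * δ} x :=
    fun hx => h (hx.hasAlternation hε)
  have hdisj : Disjoint {y ∈ K | e y = 1 * δ} {y ∈ K | e y = -1 * δ} := by
    rw [disjoint_left]
    rintro y ⟨-, hy⟩ ⟨-, hy'⟩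
    linarith
  obtain ⟨w, hwk, hpos, hneg⟩ :=
    exists_strictlySeparates_of_not_isAlternating_or_swap k (hclosed _) (hbdd _)
      (hclosed _) (hbdd _) hdisj (hnot 1 (Or.inl rfl)) (by simpa using hnot (-1) (Or.inr rfl))
  refine ⟨w, hwk, fun x hx hxe => ?_⟩
  rcases (abs_eq hδ.le).mp hxe with hxe | hxe
  · exact mul_pos (hxe ▸ hδ) (hpos x ⟨hx, by simpa⟩)
  · exact mul_pos_of_neg_of_neg (by linarith) (hneg x ⟨hx, by simpa⟩)

section Perturbation

theorem eventually_forall_abs_sub_mul_lt {X : Type*} [TopologicalSpace X] [CompactSpace X]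
    {e : X → ℝ} (he : Continuous e) {h : ℝ → X → ℝ}
    (hh : ∀ x, ContinuousAt (fun p : ℝ × X => h p.1 p.2) (0, x)) {δ : ℝ} (hle : ∀ x, |e x| ≤ δ)
    (hpos : ∀ x, |e x| = δ → 0 < e x * h 0 x) :
    ∀ᶠ t in 𝓝[>] 0, ∀ x, |e x - t * h t x| < δ := by
  suffices ∀ᶠ t in 𝓝 (0 : ℝ), ∀ x ∈ (univ : Set X), 0 < t → |e x - t * h t x| < δ from
    eventually_nhdsWithin_iff.mpr (this.mono fun t ht h0 x => ht x (mem_univ x) h0)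
  refine isCompact_univ.eventually_forall_of_forall_eventually fun x _ => ?_
  have hhx := hh x
  rcases (hle x).lt_or_eq with hlt | heq
  · have hcont : ContinuousAt (fun p : ℝ × X => |e p.2 - p.1 * h p.1 p.2|) (0, x) := by fun_prop
    filter_upwards [hcont.eventually_lt_const (by simpa using hlt)] with p hp _ using hp
  · have hcont : ContinuousAt
        (fun p : ℝ × X => 2 * (e p.2 * h p.1 p.2) - p.1 * h p.1 p.2 ^ 2) (0, x) := by fun_prop
    filter_upwards [hcont.eventually_const_lt (u := 0) (by simpa using hpos x heq)] with p hp ht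
    refine (sq_lt_sq.mp ?_).trans_le (hle p.2)
    calc (e p.2 - p.1 * h p.1 p.2) ^ 2
        = e p.2 ^ 2 - p.1 * (2 * (e p.2 * h p.1 p.2) - p.1 * h p.1 p.2 ^ 2) := by ring
      _ < e p.2 ^ 2 := sub_lt_self _ (mul_pos ht hp)

theorem eventually_forall_add_mul_ne_zero {X : Type*} [TopologicalSpace X] [CompactSpace X]
    {q r : X → ℝ} (hq : Continuous q) (hr : Continuous r) (hq0 : ∀ x, q x ≠ 0) :
    ∀ᶠ t in 𝓝 (0 : ℝ), ∀ x, q x + t * r x ≠ 0 := by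
  have hcont : Continuous fun p : ℝ × X => q p.2 + p.1 * r p.2 := by fun_prop
  simpa using isCompact_univ.eventually_forall_of_forall_eventually
    (P := fun t x => q x + t * r x ≠ 0)
    fun x _ => hcont.continuousAt.eventually_ne (by simpa using hq0 x)

theorem exists_abs_sub_add_smul_div_add_smul_lt {K : Set ℝ} (hK : IsCompact K) {f : ℝ → ℝ}
    (hf : ContinuousOn f K) {P Q P₁ Q₁ : ℝ[X]} (hQ : ∀ x ∈ K, Q.eval x ≠ 0) {δ : ℝ}
    (hle : ∀ x ∈ K, |f x - P.eval x / Q.eval x| ≤ δ)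
    (hpos : ∀ x ∈ K, |f x - P.eval x / Q.eval x| = δ →
      0 < (f x - P.eval x / Q.eval x) * (P₁ * Q - P * Q₁).eval x) :
    ∃ t : ℝ, ∀ x ∈ K, (Q + t • Q₁).eval x ≠ 0 ∧
      |f x - (P + t • P₁).eval x / (Q + t • Q₁).eval x| < δ := by
  have : CompactSpace K := isCompact_iff_compactSpace.mp hK
  have hQK (x : K) : Q.eval x.1 ≠ 0 := hQ x x.2
  have he : Continuous fun x : K => f x - P.eval x.1 / Q.eval x.1 :=
    (continuousOn_iff_continuous_domRestrict.mp hf).sub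
      (Continuous.div (by fun_prop) (by fun_prop) hQK)
  set h : ℝ → K → ℝ := fun t x =>
    (P₁ * Q - P * Q₁).eval x.1 / (Q.eval x.1 * (Q.eval x.1 + t * Q₁.eval x.1)) with h_def
  have hh (x : K) : ContinuousAt (fun p : ℝ × K => h p.1 p.2) (0, x) :=
    ContinuousAt.div (by fun_prop) (by fun_prop) (by simpa using hQK x)
  have hdiff {t : ℝ} {x : K} (ht : Q.eval x.1 + t * Q₁.eval x.1 ≠ 0) :
      f x - (P.eval x.1 + t * P₁.eval x.1) / (Q.eval x.1 + t * Q₁.eval x.1) =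
        f x - P.eval x.1 / Q.eval x.1 - t * h t x := by
    have := hQK x
    simp only [h_def, eval_sub, eval_mul]
    field_simp
    ring
  have hpos' (x : K) (hx : |f x - P.eval x.1 / Q.eval x.1| = δ) :
      0 < (f x - P.eval x.1 / Q.eval x.1) * h 0 x := by
    simp only [h_def, zero_mul, add_zero, ← mul_div_assoc]
    exact div_pos (hpos x x.2 hx) (mul_self_pos.mpr (hQK x))
  have hne : ∀ᶠ t in 𝓝[>] (0 : ℝ), ∀ x : K, Q.eval x.1 + t * Q₁.eval x.1 ≠ 0 :=
    (eventually_forall_add_mul_ne_zero (by fun_prop) (by fun_prop) hQK).filter_mono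
      nhdsWithin_le_nhds
  obtain ⟨t, hlt, ht⟩ :=
    ((eventually_forall_abs_sub_mul_lt he hh (fun x => hle x x.2) hpos').and hne).exists
  refine ⟨t, fun x hx => ⟨by simpa using ht ⟨x, hx⟩, ?_⟩⟩
  simpa [hdiff (ht ⟨x, hx⟩)] using hlt ⟨x, hx⟩

end Perturbation

theorem exists_better_approximant_of_not_hasAlternation {K : Set ℝ} (hK : IsCompact K)
    {f : ℝ → ℝ} (hf : ContinuousOn f K) {n m : ℕ} {P Q : ℝ[X]} (hcop : IsCoprime P Q)
    (hP0 : P ≠ 0) (hQ0 : Q ≠ 0) (hP : P.natDegree ≤ n) (hQ : Q.natDegree ≤ m)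
    (hQne : ∀ x ∈ K, Q.eval x ≠ 0) {δ : ℝ} (hδ : 0 < δ)
    (hle : ∀ x ∈ K, |f x - P.eval x / Q.eval x| ≤ δ)
    (halt : ¬ HasAlternation K (fun x => f x - P.eval x / Q.eval x) δ
      (max (n + Q.natDegree) (m + P.natDegree) + 2)) :
    ∃ P₁ Q₁ : ℝ[X], P₁.natDegree ≤ n ∧ Q₁.natDegree ≤ m ∧
      ∀ x ∈ K, Q₁.eval x ≠ 0 ∧ |f x - P₁.eval x / Q₁.eval x| < δ := by
  have he : ContinuousOn (fun x => f x - P.eval x / Q.eval x) K :=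
    hf.sub (P.continuousOn.div Q.continuousOn hQne)
  obtain ⟨w, hwdeg, hw⟩ := exists_polynomial_sign_eq_of_not_hasAlternation hK he hδ halt
  obtain ⟨P₁, Q₁, rfl, hP₁, hQ₁⟩ := exists_mul_sub_mul_eq_of_isCoprime hcop hP0 hQ0 hP hQ hwdeg
  obtain ⟨t, ht⟩ := exists_abs_sub_add_smul_div_add_smul_lt hK hf hQne hle hw
  exact ⟨P + t • P₁, Q + t • Q₁,
    natDegree_add_le_of_degree_le hP ((natDegree_smul_le _ _).trans hP₁),
    natDegree_add_le_of_degree_le hQ ((natDegree_smul_le _ _).trans hQ₁), ht⟩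

section UniformError

/-- The uniform distance `sup_{x ∈ s} |f x - g x|`. As a real supremum it is `0` when `s` is empty
or `f - g` is unbounded on `s`. -/
noncomputable def uniformError {X : Type*} (s : Set X) (f g : X → ℝ) : ℝ :=
  ⨆ x : s, |f x.1 - g x.1|

variable {X : Type*} [TopologicalSpace X] {s : Set X} {f g : X → ℝ}

theorem uniformError_lt_iff (hs : IsCompact s) (hne : s.Nonempty) (hf : ContinuousOn f s)
    (hg : ContinuousOn g s) {δ : ℝ} : uniformError s f g < δ ↔ ∀ x ∈ s, |f x - g x| < δ := by
  rw [uniformError, ← sSup_image' (f := fun x => |f x - g x|)]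
  exact hs.sSup_lt_iff_of_continuous hne (hf.sub hg).abs δ

theorem abs_sub_le_uniformError (hs : IsCompact s) (hf : ContinuousOn f s) (hg : ContinuousOn g s)
    {x : X} (hx : x ∈ s) : |f x - g x| ≤ uniformError s f g :=
  le_of_not_gt fun h => ((uniformError_lt_iff hs ⟨x, hx⟩ hf hg).mp h x hx).false

end UniformError

theorem IsRatFun.continuousOn {A B : ℝ} {n m : ℕ} {S : ℝ → ℝ} (hS : IsRatFun A B n m S) :
    ContinuousOn S (Icc A B) := by
  obtain ⟨P, Q, -, -, hQ, hSeq⟩ := hS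
  exact (P.continuousOn.div Q.continuousOn hQ).congr hSeq

section Characterization

variable {A B : ℝ} {f : ℝ → ℝ} {n m : ℕ} {P Q : ℝ[X]}

theorem HasAlternation.le_uniformError (hf : ContinuousOn f (Icc A B))
    (hQne : ∀ x ∈ Icc A B, Q.eval x ≠ 0) {δ : ℝ}
    (halt : HasAlternation (Icc A B) (fun x => f x - P.eval x / Q.eval x) δ
      (max (n + Q.natDegree) (m + P.natDegree) + 2))
    {S : ℝ → ℝ} (hS : IsRatFun A B n m S) : δ ≤ uniformError (Icc A B) f S := by
  have hSc := hS.continuousOn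
  obtain ⟨x, ε, hε, hx, hxI, hxe⟩ := halt
  obtain ⟨P₁, Q₁, hP₁, hQ₁, hQ₁ne, hSeq⟩ := hS
  have hlevel (k : ℕ) : ε * (-1) ^ k * (ε * (-1) ^ k * δ) = δ := by
    rcases hε with rfl | rfl <;> rcases neg_one_pow_eq_or ℝ k with hk | hk <;> simp [hk]
  obtain ⟨k, hk⟩ := de_la_vallee_poussin ordConnected_Icc hQne hQ₁ne
    (Nat.lt_succ_of_le (natDegree_mul_sub_mul_le hP₁ hQ₁)) hx hxI ((abs_eq zero_le_one).mpr hε)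
    fun k => (hlevel k).ge.trans_eq (by rw [← hxe k])
  rw [← hSeq _ (hxI k)] at hk
  exact hk.trans (abs_sub_le_uniformError isCompact_Icc hf hSc (hxI k))

theorem hasAlternation_of_forall_uniformError_le (hAB : A < B) (hf : ContinuousOn f (Icc A B))
    (hcop : IsCoprime P Q) (hP0 : P ≠ 0) (hP : P.natDegree ≤ n) (hQ : Q.natDegree ≤ m)
    (hQne : ∀ x ∈ Icc A B, Q.eval x ≠ 0)
    (hbest : ∀ S, IsRatFun A B n m S →
      uniformError (Icc A B) f (fun x => P.eval x / Q.eval x) ≤ uniformError (Icc A B) f S) :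
    HasAlternation (Icc A B) (fun x => f x - P.eval x / Q.eval x)
      (uniformError (Icc A B) f fun x => P.eval x / Q.eval x)
      (max (n + Q.natDegree) (m + P.natDegree) + 2) := by
  set Δ := uniformError (Icc A B) f fun x => P.eval x / Q.eval x
  have hne : (Icc A B).Nonempty := nonempty_Icc.mpr hAB.le
  have hQ0 : Q ≠ 0 := by
    rintro rfl
    exact hQne A (left_mem_Icc.mpr hAB.le) eval_zero
  have hle : ∀ x ∈ Icc A B, |f x - P.eval x / Q.eval x| ≤ Δ := fun x hx =>
    abs_sub_le_uniformError isCompact_Icc hf (P.continuousOn.div Q.continuousOn hQne) hx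
  rcases ((abs_nonneg _).trans (hle A (left_mem_Icc.mpr hAB.le))).eq_or_lt with hΔ | hΔ
  · rw [← hΔ] at hle ⊢
    exact hasAlternation_zero (Icc_infinite hAB) (fun x hx => abs_nonpos_iff.mp (hle x hx)) _
  · by_contra halt
    obtain ⟨P₁, Q₁, hP₁, hQ₁, hlt⟩ := exists_better_approximant_of_not_hasAlternation
      isCompact_Icc hf hcop hP0 hQ0 hP hQ hQne hΔ hle halt
    have hS : IsRatFun A B n m fun x => P₁.eval x / Q₁.eval x :=
      ⟨P₁, Q₁, hP₁, hQ₁, fun x hx => (hlt x hx).1, fun _ _ => rfl⟩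
    exact (hbest _ hS).not_gt ((uniformError_lt_iff isCompact_Icc hne hf hS.continuousOn).mpr
      fun x hx => (hlt x hx).2)

theorem chebyshev_alternation_characterization_general (hAB : A < B)
    (hf : ContinuousOn f (Icc A B)) (hcop : IsCoprime P Q) (hP0 : P ≠ 0) (hP : P.natDegree ≤ n)
    (hQ : Q.natDegree ≤ m) (hQne : ∀ x ∈ Icc A B, Q.eval x ≠ 0) :
    (∀ S, IsRatFun A B n m S →
      uniformError (Icc A B) f (fun x => P.eval x / Q.eval x) ≤ uniformError (Icc A B) f S) ↔
    HasAlternation (Icc A B) (fun x => f x - P.eval x / Q.eval x)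
      (uniformError (Icc A B) f fun x => P.eval x / Q.eval x)
      (max (n + Q.natDegree) (m + P.natDegree) + 2) :=
  ⟨hasAlternation_of_forall_uniformError_le hAB hf hcop hP0 hP hQ hQne,
    fun halt _ hS => halt.le_uniformError hf hQne hS⟩

end Characterization

/-- Chebyshev alternation characterization of the best rational approximant. -/
theorem chebyshev_alternation_characterization
    (A B : ℝ) (hAB : A < B) (f : ℝ → ℝ) (hf : ContinuousOn f (Set.Icc A B))
    (m n ν μ : ℕ) (hν : ν ≤ n) (hμ : μ ≤ m)
    (hfnotrat : ¬ ∃ S : ℝ → ℝ, IsRatFun A B n m S ∧ ∀ x ∈ Set.Icc A B, f x = S x)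
    (P Q : Polynomial ℝ) (hcop : IsCoprime P Q) (hP0 : P ≠ 0)
    (hPdeg : P.natDegree = n - ν) (hQdeg : Q.natDegree = m - μ)
    (hQne : ∀ x ∈ Set.Icc A B, Q.eval x ≠ 0)
    (R : ℝ → ℝ) (hR : ∀ x, R x = P.eval x / Q.eval x)
    (N : ℕ) (hN : N = m + n + 2 - min μ ν)
    (Δ : ℝ) (hΔ : Δ = ⨆ y : Set.Icc A B, |f y.1 - R y.1|) :
    (∀ S : ℝ → ℝ, IsRatFun A B n m S →
        Δ ≤ ⨆ y : Set.Icc A B, |f y.1 - S y.1|) ↔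
      ∃ (x : Fin N → ℝ) (ε : ℝ), (ε = 1 ∨ ε = -1) ∧ StrictMono x ∧
        (∀ k, x k ∈ Set.Icc A B) ∧
        ∀ k : Fin N, f (x k) - R (x k) = ε * (-1) ^ (k : ℕ) * Δ := by
  obtain rfl : R = fun x => P.eval x / Q.eval x := funext hR
  obtain rfl : N = max (n + Q.natDegree) (m + P.natDegree) + 2 := by omega
  subst hΔ
  exact chebyshev_alternation_characterization_general hAB hf hcop hP0 (by omega) (by omega) hQne
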